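/- arXiv:0906.2450 — 2 statements merged into one kernel-verified Lean document; each statement's English description precedes it below -/
import Mathlib

section
/- For every nonnegative integer n, there exist integers x, y, z such that n = p_5(x) + p_5(y) + 3·p_5(z), where p_5(x) = (3x² − x)/2. In other words, the sum p_5 + p_5 + 3p_5 is universal over ℤ. -/
/-- Generalized pentagonal number: `p₅(x) = (3x² − x)/2`. -/
def p5 (x : ℤ) : ℤ := (3 * x ^ 2 - x) / 2

/-!
Since `24 * p₅(x) + 1 = (6 * x - 1) ^ 2`, the number `n` is represented as soon as
`24 * n + 5 = X² + Y² + 3 * Z²` with `X`, `Y`, `Z` prime to `6`.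

Let `m = 24 * n + 5`. Dirichlet's theorem supplies a prime `p = 4 * c * m - 3` with
`c ≡ 1 (mod 12)`, and quadratic reciprocity then makes `-4 * c` a square modulo `p`. From this
square root one writes down a positive definite ternary form of determinant `3` that takes the
value `m`. By Hermite's bound on minima, such a form is integrally equivalent to `x² + y² + 3 * z²`
or to `x² + 2 * (y² + y * z + z²)`, and the latter never takes a value `≡ 5 (mod 8)`.

It remains to make the three variables prime to `6`. Multiplication by `1 ± √-3` in `ℤ[√-3]`
multiplies `y² + 3 * z²` by `4`; combined with a division by `2` it replaces `y` and `z` without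
changing the value, once to make both odd and once more to make `z` prime to `3`.
-/

open Matrix

section Bordered

variable {R κ : Type*} [CommRing R]

/-- The symmetric matrix with corner `a`, first row `(a, v)` and lower right block `D`, that is, the
quadratic form `a * t² + 2 * t * (v ⬝ᵥ y) + y ⬝ᵥ D *ᵥ y` with the variable `t` singled out. The
corner is indexed by `Unit`, so that the remaining variables keep their index type. -/
def bordered (a : R) (v : κ → R) (D : Matrix κ κ R) : Matrix (Unit ⊕ κ) (Unit ⊕ κ) R :=
  fromBlocks (of fun _ _ => a) (replicateRow Unit v) (replicateCol Unit v) D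

/-- The Schur complement `D - a⁻¹ vᵀv` of the corner of `bordered a v D`, multiplied by `a` so that
it makes sense over any ring: the form left over after completing the square in the corner
variable. -/
def scaledSchur (a : R) (v : κ → R) (D : Matrix κ κ R) : Matrix κ κ R :=
  a • D - vecMulVec v v

variable (a : R) (v : κ → R) (D : Matrix κ κ R)

theorem scaledSchur_apply_self (j : κ) : scaledSchur a v D j j = a * D j j - v j ^ 2 := by
  simp [scaledSchur, vecMulVec_apply, sq]

theorem scaledSchur_shear (w : κ → R) :
    scaledSchur a (v + a • w) (D + vecMulVec w v + vecMulVec v w + a • vecMulVec w w) =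
      scaledSchur a v D := by
  ext i j
  simp only [scaledSchur, smul_add, Matrix.sub_apply, Matrix.add_apply, Matrix.smul_apply,
    smul_eq_mul, vecMulVec_apply, Pi.add_apply, Pi.smul_apply]
  ring

variable [Fintype κ]

theorem dotProduct_bordered_mulVec (x : Unit ⊕ κ → R) :
    x ⬝ᵥ bordered a v D *ᵥ x = a * x (.inl ()) ^ 2 + 2 * x (.inl ()) * (v ⬝ᵥ x ∘ .inr) +
      x ∘ .inr ⬝ᵥ D *ᵥ x ∘ .inr := by
  simp only [bordered, dotProduct, mulVec, Fintype.sum_sum_type, Finset.univ_unique,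
    Finset.sum_singleton, PUnit.default_eq_unit, fromBlocks_apply₁₁, fromBlocks_apply₁₂,
    fromBlocks_apply₂₁, fromBlocks_apply₂₂, of_apply, replicateRow_apply, replicateCol_apply,
    Function.comp_apply, mul_add, Finset.sum_add_distrib]
  have hcol : ∑ j, x (.inr j) * (v j * x (.inl ())) = x (.inl ()) * ∑ j, v j * x (.inr j) := by
    rw [Finset.mul_sum]
    exact Finset.sum_congr rfl fun _ _ => by ring
  rw [hcol]
  ring

theorem dotProduct_scaledSchur_mulVec (y : κ → R) :
    y ⬝ᵥ scaledSchur a v D *ᵥ y = a * (y ⬝ᵥ D *ᵥ y) - (v ⬝ᵥ y) ^ 2 := by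
  simp [scaledSchur, sub_mulVec, smul_mulVec, vecMulVec_mulVec, dotProduct_comm y v, sq]

theorem mul_dotProduct_bordered_mulVec (x : Unit ⊕ κ → R) :
    a * (x ⬝ᵥ bordered a v D *ᵥ x) = (a * x (.inl ()) + v ⬝ᵥ x ∘ .inr) ^ 2 +
      x ∘ .inr ⬝ᵥ scaledSchur a v D *ᵥ x ∘ .inr := by
  rw [dotProduct_bordered_mulVec, dotProduct_scaledSchur_mulVec]
  ring

theorem det_scaledSchur [DecidableEq κ] :
    a * (scaledSchur a v D).det = a ^ Fintype.card κ * (bordered a v D).det := by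
  have h : fromBlocks 1 0 (-replicateCol Unit v) (a • 1) * bordered a v D =
      fromBlocks (of fun _ _ => a) (replicateRow Unit v) 0 (scaledSchur a v D) := by
    rw [bordered, fromBlocks_multiply]
    congr 1
    · simp
    · simp
    · ext; simp [mul_apply, mul_comm]
    · ext
      simp only [Matrix.neg_mul, Algebra.smul_mul_assoc, Matrix.one_mul, Matrix.add_apply,
        Matrix.neg_apply, mul_apply, Finset.univ_unique, replicateCol_apply, replicateRow_apply,
        Finset.sum_singleton, Matrix.smul_apply, smul_eq_mul, scaledSchur, Matrix.sub_apply,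
        vecMulVec_apply]
      ring
  have := congrArg det h
  simpa [det_fromBlocks_zero₂₁, det_fromBlocks_zero₁₂, det_smul] using this.symm

theorem scaledSchur_congr {l : Type*} (P : Matrix κ l R) :
    scaledSchur a (v ᵥ* P) (Pᵀ * D * P) = Pᵀ * scaledSchur a v D * P := by
  simp [scaledSchur, Matrix.mul_sub, Matrix.sub_mul, mul_vecMulVec, vecMulVec_mul, mulVec_transpose]

end Bordered

theorem posDef_scaledSchur {κ : Type*} [Finite κ] {a : ℤ} {v : κ → ℤ} {D : Matrix κ κ ℤ}
    (h : (bordered a v D).PosDef) : (scaledSchur a v D).PosDef := by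
  have := Fintype.ofFinite κ
  have ha : 0 < a := h.diag_pos (i := .inl ())
  have hD : D.IsHermitian := h.isHermitian.submatrix .inr
  refine .of_dotProduct_mulVec_pos ?_ fun y hy => ?_
  · ext i j
    simpa [scaledSchur, vecMulVec_apply, mul_comm] using Or.inl (hD.apply i j)
  · set x : Unit ⊕ κ → ℤ := Sum.elim (fun _ => -(v ⬝ᵥ y)) (a • y) with hx
    have hx0 : x ≠ 0 := fun h0 => hy <| by
      simpa [hx, ha.ne', -zsmul_eq_mul] using congrArg (· ∘ Sum.inr) h0
    have hxx : a * (x ⬝ᵥ bordered a v D *ᵥ x) = a * (a * (y ⬝ᵥ scaledSchur a v D *ᵥ y)) := by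
      rw [mul_dotProduct_bordered_mulVec]
      simp [hx, mulVec_smul, -zsmul_eq_mul]
    have hpos := h.dotProduct_mulVec_pos hx0
    rw [star_trivial, mul_left_cancel₀ ha.ne' hxx] at hpos
    simpa using pos_of_mul_pos_right hpos ha.le

section IntCongruent

variable {ι κ μ : Type*} [Fintype ι] [DecidableEq ι] [Fintype κ] [DecidableEq κ]
  [Fintype μ] [DecidableEq μ]

/-- Integral equivalence of the quadratic forms with matrices `M` and `N`: an invertible integral
change of variables `P` turns `M` into `N`. The index types may differ, so that reindexing is a
special case; the inverse of the rectangular matrix `P` is then given explicitly. -/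
def IntCongruent (M : Matrix ι ι ℤ) (N : Matrix κ κ ℤ) : Prop :=
  ∃ (P : Matrix ι κ ℤ) (Q : Matrix κ ι ℤ), P * Q = 1 ∧ Q * P = 1 ∧ Pᵀ * M * P = N

namespace IntCongruent

variable {M : Matrix ι ι ℤ} {N : Matrix κ κ ℤ} {L : Matrix μ μ ℤ}

theorem trans (h₁ : IntCongruent M N) (h₂ : IntCongruent N L) : IntCongruent M L := by
  obtain ⟨P₁, Q₁, hPQ₁, hQP₁, rfl⟩ := h₁
  obtain ⟨P₂, Q₂, hPQ₂, hQP₂, rfl⟩ := h₂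
  refine ⟨P₁ * P₂, Q₂ * Q₁, ?_, ?_, ?_⟩
  · rw [Matrix.mul_assoc, ← Matrix.mul_assoc P₂, hPQ₂, Matrix.one_mul, hPQ₁]
  · rw [Matrix.mul_assoc, ← Matrix.mul_assoc Q₁, hQP₁, Matrix.one_mul, hQP₂]
  · simp only [transpose_mul, Matrix.mul_assoc]

theorem submatrix (M : Matrix ι ι ℤ) (e : κ ≃ ι) : IntCongruent M (M.submatrix e e) :=
  ⟨(1 : Matrix ι ι ℤ).submatrix id e, (1 : Matrix ι ι ℤ).submatrix e id, by
    rw [submatrix_mul_equiv]; simp, by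
    ext; simp [mul_apply, one_apply], by
    ext; simp [mul_apply, one_apply]⟩

theorem card_eq (h : IntCongruent M N) : Fintype.card ι = Fintype.card κ := by
  obtain ⟨P, Q, hPQ, hQP, -⟩ := h
  exact square_of_invertible P Q hPQ hQP

theorem det_eq (h : IntCongruent M N) : M.det = N.det := by
  have e : κ ≃ ι := Fintype.equivOfCardEq h.card_eq.symm
  obtain ⟨P, Q, hPQ, -, rfl⟩ := h
  have hunit : IsUnit (P.submatrix id e.symm).det := by
    refine (isUnit_iff_isUnit_det _).mp <| IsUnit.of_mul_eq_one (Q.submatrix e.symm id) ?_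
    rw [submatrix_mul_equiv, hPQ, submatrix_id_id]
  have : (Pᵀ * M * P).submatrix e.symm e.symm =
      (P.submatrix id e.symm)ᵀ * M * P.submatrix id e.symm := by
    ext; simp [mul_apply]
  rw [← det_submatrix_equiv_self e.symm, this, det_mul, det_mul, det_transpose, mul_right_comm,
    Int.isUnit_mul_self hunit, one_mul]

theorem posDef (h : IntCongruent M N) (hM : M.PosDef) : N.PosDef := by
  obtain ⟨P, Q, -, hQP, rfl⟩ := h
  refine hM.conjTranspose_mul_mul_same (B := P) fun x y hxy => ?_
  simpa [hQP] using congrArg (Q *ᵥ ·) hxy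

theorem exists_dotProduct_mulVec_eq (h : IntCongruent M N) (x : ι → ℤ) :
    ∃ y, x ⬝ᵥ M *ᵥ x = y ⬝ᵥ N *ᵥ y := by
  obtain ⟨P, Q, hPQ, -, rfl⟩ := h
  have hx : P *ᵥ Q *ᵥ x = x := by rw [mulVec_mulVec, hPQ, one_mulVec]
  refine ⟨Q *ᵥ x, ?_⟩
  rw [← mulVec_mulVec, ← mulVec_mulVec, hx, dotProduct_mulVec _ Pᵀ, vecMul_transpose, hx]

theorem bordered_congr {a : ℤ} {v : κ → ℤ} {D : Matrix κ κ ℤ} {P : Matrix κ μ ℤ}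
    {Q : Matrix μ κ ℤ} (hPQ : P * Q = 1) (hQP : Q * P = 1) :
    IntCongruent (bordered a v D) (bordered a (v ᵥ* P) (Pᵀ * D * P)) := by
  refine ⟨fromBlocks 1 0 0 P, fromBlocks 1 0 0 Q, ?_, ?_, ?_⟩
  · simp [fromBlocks_multiply, hPQ]
  · simp [fromBlocks_multiply, hQP]
  · simp only [bordered, fromBlocks_transpose, fromBlocks_multiply]
    congr 1
    · simp
    · ext; simp [mul_apply, vecMul, dotProduct]
    · ext; simp [mul_apply, vecMul, dotProduct, mul_comm]
    · simp

theorem bordered_shear (a : ℤ) (v : κ → ℤ) (D : Matrix κ κ ℤ) (w : κ → ℤ) :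
    IntCongruent (bordered a v D) (bordered a (v + a • w)
      (D + vecMulVec w v + vecMulVec v w + a • vecMulVec w w)) := by
  refine ⟨fromBlocks 1 (replicateRow Unit w) 0 1, fromBlocks 1 (-replicateRow Unit w) 0 1,
    ?_, ?_, ?_⟩
  · simp [fromBlocks_multiply]
  · simp [fromBlocks_multiply]
  · simp only [bordered, fromBlocks_transpose, fromBlocks_multiply]
    congr 1
    · simp
    · ext
      simp only [transpose_one, transpose_zero, Matrix.one_mul, Matrix.zero_mul, Matrix.mul_one,
        add_zero, Matrix.add_apply, mul_apply, Finset.univ_unique, of_apply, replicateRow_apply,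
        Finset.sum_singleton, Pi.add_apply, Pi.smul_apply, smul_eq_mul]
      ring
    · ext
      simp only [transpose_replicateRow, transpose_one, Matrix.one_mul, Matrix.mul_one,
        Matrix.mul_zero, add_zero, Matrix.add_apply, mul_apply, Finset.univ_unique,
        replicateCol_apply, of_apply, Finset.sum_singleton, Matrix.zero_apply, Pi.add_apply,
        Pi.smul_apply, smul_eq_mul]
      ring
    · ext
      simp only [transpose_replicateRow, transpose_one, Matrix.one_mul, Matrix.mul_one,
        Matrix.add_apply, mul_apply, Finset.univ_unique, replicateCol_apply, of_apply,
        Finset.sum_singleton, replicateRow_apply, vecMulVec_apply, Matrix.smul_apply, smul_eq_mul]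
      ring

theorem exists_bordered {n : ℕ} (hM : M.IsSymm) (hι : Fintype.card ι = n + 1) (i : ι) :
    ∃ (v : Fin n → ℤ) (D : Matrix (Fin n) (Fin n) ℤ), IntCongruent M (bordered (M i i) v D) := by
  have e₀ : Unit ⊕ Fin n ≃ ι := Fintype.equivOfCardEq (by simp [hι, add_comm])
  set e := e₀.trans (Equiv.swap (e₀ (.inl ())) i)
  have he : e (.inl ()) = i := by simp [e]
  refine ⟨fun j => M i (e (.inr j)), M.submatrix (e ∘ .inr) (e ∘ .inr), ?_⟩
  convert IntCongruent.submatrix M e using 1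
  ext (_ | j) (_ | k) <;> simp [bordered, he, hM.apply]

end IntCongruent

theorem three_mul_sq_le_of_minimal {a : ℕ} {v : κ → ℤ} {D : Matrix κ κ ℤ} (ha : 0 < a)
    (hmin : ∀ (v' : μ → ℤ) (D' : Matrix μ μ ℤ),
      IntCongruent (bordered (a : ℤ) v D) (bordered (a : ℤ) v' D') → ∀ j, (a : ℤ) ≤ D' j j)
    {S : Matrix μ μ ℤ} (hS : IntCongruent (scaledSchur (a : ℤ) v D) S) (j : μ) :
    3 * (a : ℤ) ^ 2 ≤ 4 * S j j := by
  obtain ⟨P, Q, hPQ, hQP, rfl⟩ := hS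
  set v₁ := v ᵥ* P
  set D₁ := Pᵀ * D * P
  -- The shear by `w` reduces the entries of `v₁` to their residues of least absolute value.
  set w : μ → ℤ := fun j => -(v₁ j).bdiv a
  set v₂ := v₁ + (a : ℤ) • w
  set D₂ := D₁ + vecMulVec w v₁ + vecMulVec v₁ w + (a : ℤ) • vecMulVec w w
  have hle : (a : ℤ) ≤ D₂ j j := hmin v₂ D₂
    ((IntCongruent.bordered_congr hPQ hQP).trans (.bordered_shear a v₁ D₁ w)) j
  have hdiag : (Pᵀ * scaledSchur (a : ℤ) v D * P) j j = a * D₂ j j - v₂ j ^ 2 := by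
    rw [← scaledSchur_congr, ← scaledSchur_shear (a : ℤ) v₁ D₁ w, scaledSchur_apply_self]
  have hv : v₂ j = (v₁ j).bmod a := by
    simp [v₂, w, Int.bmod_eq_self_sub_mul_bdiv, sub_eq_add_neg]
  have h₁ := Int.le_bmod (x := v₁ j) ha
  have h₂ := Int.bmod_lt (x := v₁ j) ha
  have hv₂ : 4 * v₂ j ^ 2 ≤ (a : ℤ) ^ 2 := by
    rw [hv]
    nlinarith [show -(a : ℤ) ≤ 2 * (v₁ j).bmod a by omega,
      show 2 * (v₁ j).bmod a ≤ (a : ℤ) by omega]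
  rw [hdiag]
  nlinarith

end IntCongruent

theorem exists_bordered_minimal {n : ℕ} {M : Matrix (Fin (n + 1)) (Fin (n + 1)) ℤ}
    (hM : M.PosDef) : ∃ (a : ℕ) (v : Fin n → ℤ) (D : Matrix (Fin n) (Fin n) ℤ),
      IntCongruent M (bordered (a : ℤ) v D) ∧
      ∀ {κ : Type} [Fintype κ] [DecidableEq κ] (N : Matrix κ κ ℤ),
        IntCongruent M N → ∀ j, (a : ℤ) ≤ N j j := by
  classical
  have hdiag {κ : Type} [Fintype κ] [DecidableEq κ] (N : Matrix κ κ ℤ) (hMN : IntCongruent M N)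
      (j : κ) : ∃ (v : Fin n → ℤ) (D : Matrix (Fin n) (Fin n) ℤ),
        IntCongruent M (bordered ((N j j).toNat : ℤ) v D) := by
    have hN := hMN.posDef hM
    obtain ⟨v, D, h⟩ := IntCongruent.exists_bordered hN.isHermitian
      (by rw [← hMN.card_eq, Fintype.card_fin]) j
    exact ⟨v, D, by rw [Int.toNat_of_nonneg hN.diag_pos.le]; exact hMN.trans h⟩
  have hex : ∃ (a : ℕ) (v : Fin n → ℤ) (D : Matrix (Fin n) (Fin n) ℤ),
      IntCongruent M (bordered (a : ℤ) v D) :=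
    ⟨_, hdiag _ (.submatrix M (.refl _)) 0⟩
  obtain ⟨v, D, h⟩ := Nat.find_spec hex
  refine ⟨Nat.find hex, v, D, h, fun {κ} _ _ N hMN j => ?_⟩
  have := Nat.find_min' hex (hdiag N hMN j)
  have := (hMN.posDef hM).diag_pos (i := j)
  omega

theorem exists_bordered_hermite {n : ℕ} {M : Matrix (Fin (n + 1)) (Fin (n + 1)) ℤ}
    (hM : M.PosDef) : ∃ (a : ℤ) (v : Fin n → ℤ) (D : Matrix (Fin n) (Fin n) ℤ),
      IntCongruent M (bordered a v D) ∧
      3 ^ (n + 1).choose 2 * a ^ (n + 1) ≤ 4 ^ (n + 1).choose 2 * M.det := by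
  induction n with
  | zero =>
    obtain ⟨v, D, h⟩ := IntCongruent.exists_bordered hM.isHermitian (Fintype.card_fin 1) 0
    exact ⟨_, v, D, h, by simp⟩
  | succ n ih =>
    obtain ⟨a, v, D, hMa, hmin⟩ := exists_bordered_minimal hM
    have hpos := hMa.posDef hM
    have ha : (0 : ℤ) < a := hpos.diag_pos (i := .inl ())
    obtain ⟨b, v', D', hS, hb⟩ := ih (posDef_scaledSchur hpos)
    have hdet : (scaledSchur (a : ℤ) v D).det = a ^ n * M.det := by
      have := det_scaledSchur (a : ℤ) v D
      rw [Fintype.card_fin, pow_succ', mul_assoc, ← hMa.det_eq] at this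
      exact mul_left_cancel₀ ha.ne' this
    have hab : 3 * (a : ℤ) ^ 2 ≤ 4 * b :=
      three_mul_sq_le_of_minimal (by exact_mod_cast ha)
        (fun v' D' h j => hmin _ (hMa.trans h) (.inr j)) hS (.inl ())
    refine ⟨a, v, D, hMa, le_of_mul_le_mul_left ?_ (pow_pos ha n)⟩
    have hC : (n + 2).choose 2 = (n + 1) + (n + 1).choose 2 := by
      rw [Nat.choose_succ_succ', Nat.choose_one_right]
    calc (a : ℤ) ^ n * (3 ^ (n + 2).choose 2 * a ^ (n + 2))
        = 3 ^ (n + 1).choose 2 * (3 * a ^ 2) ^ (n + 1) := by rw [hC]; ring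
      _ ≤ 3 ^ (n + 1).choose 2 * (4 * b) ^ (n + 1) := by gcongr
      _ = 4 ^ (n + 1) * (3 ^ (n + 1).choose 2 * b ^ (n + 1)) := by ring
      _ ≤ 4 ^ (n + 1) * (4 ^ (n + 1).choose 2 * (scaledSchur (a : ℤ) v D).det) := by gcongr
      _ = a ^ n * (4 ^ (n + 2).choose 2 * M.det) := by rw [hC, hdet]; ring

theorem exists_eq_of_posDef_fin_two_of_det_eq_three {M : Matrix (Fin 2) (Fin 2) ℤ}
    (hM : M.PosDef) (hdet : M.det = 3) (x : Fin 2 → ℤ) :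
    ∃ Y Z : ℤ, x ⬝ᵥ M *ᵥ x = Y ^ 2 + 3 * Z ^ 2 ∨
      x ⬝ᵥ M *ᵥ x = 2 * (Y ^ 2 + Y * Z + Z ^ 2) := by
  obtain ⟨a, v, D, hMa, ha⟩ := exists_bordered_hermite hM
  have ha₀ : 0 < a := (hMa.posDef hM).diag_pos (i := .inl ())
  have ha₂ : a ≤ 2 := by
    rw [hdet, one_add_one_eq_two, Nat.choose_self, pow_one, pow_one] at ha
    nlinarith
  have hS : scaledSchur a v D 0 0 = 3 := by
    have h := det_scaledSchur a v D
    rw [← hMa.det_eq, hdet, Fintype.card_fin, pow_one] at h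
    rw [← det_fin_one (scaledSchur a v D), mul_left_cancel₀ ha₀.ne' h]
  obtain ⟨y, hy⟩ := hMa.exists_dotProduct_mulVec_eq x
  have hsq : a * (x ⬝ᵥ M *ᵥ x) =
      (a * y (.inl ()) + v 0 * y (.inr 0)) ^ 2 + 3 * y (.inr 0) ^ 2 := by
    rw [hy, mul_dotProduct_bordered_mulVec]
    simp only [dotProduct, mulVec, Finset.univ_unique, Fin.default_eq_zero, Function.comp_apply,
      Finset.sum_singleton, hS]
    ring
  obtain rfl | rfl : a = 1 ∨ a = 2 := by omega
  · exact ⟨_, _, .inl (by rwa [one_mul] at hsq)⟩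
  · have hv : Odd (v 0) := by
      rw [scaledSchur_apply_self] at hS
      rw [← Int.odd_pow' two_ne_zero]
      exact ⟨D 0 0 - 2, by linarith⟩
    obtain ⟨k, hk⟩ := hv
    refine ⟨y (.inl ()) + k * y (.inr 0), y (.inr 0), .inr ?_⟩
    rw [hk] at hsq
    linarith

theorem exists_eq_of_posDef_fin_three_of_det_eq_three {M : Matrix (Fin 3) (Fin 3) ℤ}
    (hM : M.PosDef) (hdet : M.det = 3) (x : Fin 3 → ℤ) :
    ∃ X Y Z : ℤ, x ⬝ᵥ M *ᵥ x = X ^ 2 + Y ^ 2 + 3 * Z ^ 2 ∨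
      x ⬝ᵥ M *ᵥ x = X ^ 2 + 2 * (Y ^ 2 + Y * Z + Z ^ 2) := by
  obtain ⟨a, v, D, hMa, ha⟩ := exists_bordered_hermite hM
  have hpos := hMa.posDef hM
  have ha₀ : 0 < a := hpos.diag_pos (i := .inl ())
  obtain rfl : a = 1 := by
    rw [hdet, show Nat.choose (2 + 1) 2 = 3 from rfl, two_add_one_eq_three] at ha
    by_contra ha₁
    have : 2 ^ 3 ≤ a ^ 3 := by gcongr; omega
    omega
  have hS : (scaledSchur 1 v D).det = 3 := by
    simpa [← hMa.det_eq, hdet] using det_scaledSchur 1 v D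
  obtain ⟨y, hy⟩ := hMa.exists_dotProduct_mulVec_eq x
  have hsq := mul_dotProduct_bordered_mulVec 1 v D y
  rw [one_mul, one_mul, ← hy] at hsq
  obtain ⟨Y, Z, h | h⟩ :=
    exists_eq_of_posDef_fin_two_of_det_eq_three (posDef_scaledSchur hpos) hS (y ∘ .inr)
  · exact ⟨_, Y, Z, .inl (by rw [hsq, h, add_assoc])⟩
  · exact ⟨_, Y, Z, .inr (by rw [hsq, h])⟩

theorem posDef_fin_three {a b c d e f : ℤ} (ha : 0 < a) (hA : 0 < a * b - f ^ 2)
    (hdet : 0 < (!![a, f, e; f, b, d; e, d, c]).det) :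
    (!![a, f, e; f, b, d; e, d, c]).PosDef := by
  set Δ := (!![a, f, e; f, b, d; e, d, c]).det with hΔ
  refine .of_dotProduct_mulVec_pos (by ext i j; fin_cases i <;> fin_cases j <;> rfl) fun x hx => ?_
  have hsq : a * (a * b - f ^ 2) * (star x ⬝ᵥ !![a, f, e; f, b, d; e, d, c] *ᵥ x) =
      (a * b - f ^ 2) * (a * x 0 + f * x 1 + e * x 2) ^ 2 +
        ((a * b - f ^ 2) * x 1 + (a * d - e * f) * x 2) ^ 2 + a * Δ * x 2 ^ 2 := by
    rw [hΔ, det_fin_three]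
    simp only [dotProduct, star_trivial, mulVec, of_apply, cons_val', cons_val_fin_one,
      Fin.sum_univ_three, cons_val_zero, cons_val_one, cons_val]
    ring
  refine pos_of_mul_pos_right (hsq ▸ ?_) (mul_pos ha hA).le
  by_cases h₂ : x 2 = 0
  · by_cases h₁ : x 1 = 0
    · have h₀ : x 0 ≠ 0 := fun h₀ => hx <| by ext i; fin_cases i <;> assumption
      simp only [h₁, h₂, mul_zero, add_zero]
      positivity
    · simp only [h₂, mul_zero, add_zero]
      positivity
  · positivity

theorem exists_prime_add_three_eq_four_mul_mul {m : ℕ} (hm : ¬ 3 ∣ m) :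
    ∃ c p : ℕ, c % 12 = 1 ∧ p.Prime ∧ p + 3 = 4 * c * m := by
  have hm₀ : 0 < m := by omega
  have hcop : (4 * m - 3).Coprime (48 * m) := by
    have h₃ : (4 * m - 3).Coprime 3 :=
      Nat.coprime_comm.mp <| (Nat.Prime.coprime_iff_not_dvd Nat.prime_three).mpr (by omega)
    have h₄ : (4 * m - 3).Coprime (4 * m) := by
      rw [Nat.coprime_self_sub_left (by omega), Nat.Prime.coprime_iff_not_dvd Nat.prime_three]
      omega
    rw [show 48 * m = 3 * 4 * (4 * m) by ring]
    exact (h₃.mul_right h₄.coprime_mul_right_right).mul_right h₄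
  obtain ⟨p, hlt, hp, hmod⟩ := Nat.forall_exists_prime_gt_and_modEq (4 * m) (by positivity) hcop
  obtain ⟨k, hk⟩ := (Nat.modEq_iff_dvd' (by omega)).mp hmod.symm
  refine ⟨12 * k + 1, p, by omega, hp, ?_⟩
  calc p + 3 = 48 * m * k + 4 * m := by omega
    _ = 4 * (12 * k + 1) * m := by ring

open NumberTheorySymbols in
theorem jacobiSym_eq_one_of_add_three {c m p : ℕ} (hc : c % 12 = 1) (h : p + 3 = 4 * c * m) :
    J(c | p) = 1 := by
  have hp : p % 4 = 1 := by rw [mul_assoc] at h; omega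
  have hpc : (p : ℤ) ≡ -1 * (3 : ℕ) [ZMOD c] := by
    have : (p : ℤ) + 3 = 4 * c * m := by exact_mod_cast h
    exact (Int.modEq_iff_dvd.mpr ⟨4 * m, by push_cast; linarith⟩).symm
  calc J(c | p) = J(p | c) :=
        jacobiSym.quadratic_reciprocity_one_mod_four (by omega) (Nat.odd_iff.mpr (by omega))
    _ = J(-1 * (3 : ℕ) | c) := jacobiSym.mod_left' hpc
    _ = J((3 : ℕ) | c) := by
      rw [jacobiSym.mul_left, jacobiSym.at_neg_one (Nat.odd_iff.mpr (by omega)),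
        ZMod.χ₄_nat_one_mod_four (by omega), one_mul]
    _ = J(c | 3) := jacobiSym.quadratic_reciprocity_one_mod_four' (by decide) (by omega)
    _ = 1 := by
      rw [jacobiSym.mod_left' (show (c : ℤ) ≡ 1 [ZMOD (3 : ℕ)] by
        unfold Int.ModEq; push_cast; omega), jacobiSym.one_left]

theorem exists_dvd_sq_add_four_mul {c m p : ℕ} (hp : p.Prime) (hc : c % 12 = 1)
    (h : p + 3 = 4 * c * m) : ∃ t : ℤ, (p : ℤ) ∣ t ^ 2 + 4 * c := by
  have := Fact.mk hp
  have hp4 : p % 4 = 1 := by rw [mul_assoc] at h; omega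
  obtain ⟨u, hu⟩ := ZMod.isSquare_of_jacobiSym_eq_one (jacobiSym_eq_one_of_add_three hc h)
  obtain ⟨i, hi⟩ := ZMod.exists_sq_eq_neg_one_iff (p := p) |>.mpr (by omega)
  obtain ⟨t, ht⟩ := ZMod.intCast_surjective (2 * i * u)
  refine ⟨t, (ZMod.intCast_zmod_eq_zero_iff_dvd _ p).mp ?_⟩
  push_cast at hu ⊢
  rw [ht, hu]
  linear_combination (-4 * u ^ 2) * hi

theorem exists_posDef_det_eq_three_of_not_three_dvd {m : ℕ} (hm : ¬ 3 ∣ m) :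
    ∃ M : Matrix (Fin 3) (Fin 3) ℤ, M.PosDef ∧ M.det = 3 ∧ M 2 2 = m := by
  obtain ⟨c, p, hc, hp, h⟩ := exists_prime_add_three_eq_four_mul_mul hm
  obtain ⟨t, b, hb⟩ := exists_dvd_sq_add_four_mul hp hc h
  have hp₀ : (0 : ℤ) < p := by exact_mod_cast hp.pos
  have hminor : (p : ℤ) * b - t ^ 2 = 4 * c := by linarith
  have hdet : (!![(p : ℤ), t, 0; t, b, 1; 0, 1, (m : ℤ)]).det = 3 := by
    rw [det_fin_three]
    have : (p : ℤ) + 3 = 4 * c * m := by exact_mod_cast h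
    simp only [of_apply, cons_val', cons_val_zero, cons_val_fin_one, cons_val_one, cons_val]
    linear_combination (m : ℤ) * hminor - this
  exact ⟨_, posDef_fin_three hp₀ (by rw [hminor]; omega) (by rw [hdet]; norm_num), hdet, rfl⟩

theorem exists_eq_sq_add_sq_add_three_mul_sq {m : ℕ} (hm₈ : m % 8 = 5) (hm₃ : ¬ 3 ∣ m) :
    ∃ X Y Z : ℤ, (m : ℤ) = X ^ 2 + Y ^ 2 + 3 * Z ^ 2 := by
  obtain ⟨M, hM, hdet, hm⟩ := exists_posDef_det_eq_three_of_not_three_dvd hm₃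
  have hval : Pi.single 2 1 ⬝ᵥ M *ᵥ Pi.single 2 1 = (m : ℤ) := by simp [hm]
  obtain ⟨X, Y, Z, h | h⟩ := exists_eq_of_posDef_fin_three_of_det_eq_three hM hdet (Pi.single 2 1)
  · exact ⟨X, Y, Z, hval ▸ h⟩
  · have hne : ∀ X Y Z : ZMod 8, X ^ 2 + 2 * (Y ^ 2 + Y * Z + Z ^ 2) ≠ 5 := by decide
    refine absurd ?_ (hne X Y Z)
    have hm5 : ((m : ℤ) : ZMod 8) = (5 : ℤ) := by
      rw [ZMod.intCast_eq_intCast_iff']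
      push_cast
      omega
    rw [← hval, h] at hm5
    exact_mod_cast hm5

theorem exists_odd_sq_add_three_mul_sq_eq {Y Z : ℤ} (h : (Y ^ 2 + 3 * Z ^ 2) % 8 = 4) :
    ∃ Y' Z' : ℤ, Odd Y' ∧ Odd Z' ∧ Y' ^ 2 + 3 * Z' ^ 2 = Y ^ 2 + 3 * Z ^ 2 := by
  have hYZ : Odd Y ↔ Odd Z := by
    have : Even (Y ^ 2 + 3 * Z ^ 2) := Int.even_iff.mpr (by omega)
    simpa [Int.even_add', Int.odd_mul, Int.odd_pow, show Odd (3 : ℤ) by decide] using this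
  by_cases hY : Odd Y
  · exact ⟨Y, Z, hY, hYZ.mp hY, rfl⟩
  · obtain ⟨y, rfl⟩ := even_iff_two_dvd.mp (Int.not_odd_iff_even.mp hY)
    obtain ⟨z, rfl⟩ := even_iff_two_dvd.mp (Int.not_odd_iff_even.mp (hYZ.not.mp hY))
    have hyz : Odd (y ^ 2 + 3 * z ^ 2) := by
      rw [mul_pow, mul_pow] at h
      exact Int.odd_iff.mpr (by omega)
    refine ⟨y - 3 * z, y + z, ?_, ?_, by ring⟩ <;>
      simpa [Int.odd_add, Int.odd_sub, Int.even_mul, Int.even_pow, Int.odd_pow,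
        show ¬Even (3 : ℤ) by decide] using hyz

theorem exists_odd_eq_sq_add_sq_add_three_mul_sq {m : ℕ} (hm₈ : m % 8 = 5) (hm₃ : ¬ 3 ∣ m) :
    ∃ X Y Z : ℤ, Odd X ∧ Odd Y ∧ Odd Z ∧ (m : ℤ) = X ^ 2 + Y ^ 2 + 3 * Z ^ 2 := by
  obtain ⟨X, Y, Z, h⟩ := exists_eq_sq_add_sq_add_three_mul_sq hm₈ hm₃
  wlog hX : Odd X generalizing X Y
  · have hY : Odd Y := by
      by_contra hY
      obtain ⟨x, rfl⟩ := even_iff_two_dvd.mp (Int.not_odd_iff_even.mp hX)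
      obtain ⟨y, rfl⟩ := even_iff_two_dvd.mp (Int.not_odd_iff_even.mp hY)
      rw [mul_pow, mul_pow] at h
      have hZ : Odd (Z ^ 2) := Int.odd_iff.mpr (by omega)
      have := Int.sq_mod_four_eq_one_of_odd ((Int.odd_pow' two_ne_zero).mp hZ)
      omega
    exact this Y X (by rw [h]; ring) hY
  have hX8 := Int.eight_dvd_sq_sub_one_of_odd hX
  obtain ⟨Y', Z', hY', hZ', hYZ⟩ :=
    exists_odd_sq_add_three_mul_sq_eq (Y := Y) (Z := Z) (by omega)
  exact ⟨X, Y', Z', hX, hY', hZ', by rw [h, add_assoc, ← hYZ, add_assoc]⟩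

theorem sq_emod_three_of_not_three_dvd {t : ℤ} (ht : ¬ 3 ∣ t) : t ^ 2 % 3 = 1 :=
  Int.ModEq.pow_card_sub_one_eq_one Nat.prime_three
    (isCoprime_comm.mp <| (Int.prime_three.coprime_iff_not_dvd).mpr ht)

theorem not_three_dvd_of_sq_add_sq {X Y : ℤ} (h : (X ^ 2 + Y ^ 2) % 3 = 2) : ¬ 3 ∣ X := by
  rintro ⟨x, rfl⟩
  rw [mul_pow] at h
  by_cases hY : 3 ∣ Y
  · obtain ⟨y, rfl⟩ := hY
    rw [mul_pow] at h
    omega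
  · have := sq_emod_three_of_not_three_dvd hY
    omega

theorem exists_odd_not_three_dvd_sq_add_three_mul_sq_eq {Y Z : ℤ} (hY : Odd Y) (hZ : Odd Z)
    (hY₃ : ¬ 3 ∣ Y) : ∃ Y' Z' : ℤ, Odd Y' ∧ Odd Z' ∧ ¬ 3 ∣ Y' ∧ ¬ 3 ∣ Z' ∧
      Y' ^ 2 + 3 * Z' ^ 2 = Y ^ 2 + 3 * Z ^ 2 := by
  by_cases hZ₃ : 3 ∣ Z
  · rw [Int.odd_iff] at hY hZ
    wlog h : (Y + Z) % 4 = 2 generalizing Z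
    · simpa using this (Z := -Z) (by omega) (by omega) (by omega)
    obtain ⟨w, rfl⟩ : ∃ w, Y = 2 * w - Z := ⟨(Y + Z) / 2, by omega⟩
    exact ⟨w - 2 * Z, w, Int.odd_iff.mpr (by omega), Int.odd_iff.mpr (by omega), by omega,
      by omega, by ring⟩
  · exact ⟨Y, Z, hY, hZ, hY₃, hZ₃, rfl⟩

theorem exists_odd_not_three_dvd_eq_sq_add_sq_add_three_mul_sq {m : ℕ} (hm : m % 24 = 5) :
    ∃ X Y Z : ℤ, (Odd X ∧ ¬ 3 ∣ X) ∧ (Odd Y ∧ ¬ 3 ∣ Y) ∧ (Odd Z ∧ ¬ 3 ∣ Z) ∧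
      (m : ℤ) = X ^ 2 + Y ^ 2 + 3 * Z ^ 2 := by
  obtain ⟨X, Y, Z, hX, hY, hZ, h⟩ :=
    exists_odd_eq_sq_add_sq_add_three_mul_sq (m := m) (by omega) (by omega)
  have hX₃ : ¬ 3 ∣ X := not_three_dvd_of_sq_add_sq (Y := Y) (by omega)
  have hY₃ : ¬ 3 ∣ Y := not_three_dvd_of_sq_add_sq (Y := X) (by omega)
  obtain ⟨Y', Z', hY', hZ', hY₃', hZ₃', hYZ⟩ :=
    exists_odd_not_three_dvd_sq_add_three_mul_sq_eq hY hZ hY₃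
  exact ⟨X, Y', Z', ⟨hX, hX₃⟩, ⟨hY', hY₃'⟩, ⟨hZ', hZ₃'⟩, by rw [h, add_assoc, ← hYZ, add_assoc]⟩

theorem twentyFour_mul_p5_add_one (x : ℤ) : 24 * p5 x + 1 = (6 * x - 1) ^ 2 := by
  have heven : 2 ∣ 3 * x ^ 2 - x := by
    rw [← even_iff_two_dvd]
    simp [Int.even_sub, Int.even_mul, Int.even_pow, show ¬Even (3 : ℤ) by decide]
  have := Int.mul_ediv_cancel' heven
  unfold p5
  linear_combination 12 * this

theorem exists_twentyFour_mul_p5_add_one_eq_sq {t : ℤ} (h₂ : Odd t) (h₃ : ¬ 3 ∣ t) :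
    ∃ x : ℤ, 24 * p5 x + 1 = t ^ 2 := by
  rw [Int.odd_iff] at h₂
  obtain h | h : t % 6 = 5 ∨ t % 6 = 1 := by omega
  · exact ⟨(t + 1) / 6, by rw [twentyFour_mul_p5_add_one]; congr 1; omega⟩
  · exact ⟨(1 - t) / 6, by rw [twentyFour_mul_p5_add_one, ← neg_sq t]; congr 1; omega⟩

theorem p5_add_1p5_add_3p5_universal (n : ℕ) :
    ∃ x y z : ℤ, (n : ℤ) = p5 x + 1 * p5 y + 3 * p5 z := by
  obtain ⟨X, Y, Z, ⟨hX, hX₃⟩, ⟨hY, hY₃⟩, ⟨hZ, hZ₃⟩, h⟩ :=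
    exists_odd_not_three_dvd_eq_sq_add_sq_add_three_mul_sq (m := 24 * n + 5) (by omega)
  obtain ⟨x, hx⟩ := exists_twentyFour_mul_p5_add_one_eq_sq hX hX₃
  obtain ⟨y, hy⟩ := exists_twentyFour_mul_p5_add_one_eq_sq hY hY₃
  obtain ⟨z, hz⟩ := exists_twentyFour_mul_p5_add_one_eq_sq hZ hZ₃
  refine ⟨x, y, z, ?_⟩
  rw [← hx, ← hy, ← hz] at h
  push_cast at h
  linarith
end

section
/- For every nonnegative integer n, there exist integers x, y, z such that n = p_5(x) + 2·p_5(y) + 6·p_5(z), where p_5(x) = (3x² − x)/2. In other words, the sum p_5 + 2p_5 + 6p_5 is universal over ℤ. -/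
/-!
Since `(6x - 1)² = 24 p₅(x) + 1` and the integers prime to `6` are the `±(6x - 1)`, the claim is
that `24n + 9 = a² + 2b² + 6c²` with `a`, `b`, `c` prime to `6`.

The number `m = 8n + 3` is a sum of three squares: Dirichlet's theorem provides a prime
`p ≡ 1 (mod 4)` with `2p + 1 = bm` and `b ≡ 1 (mod 8)`, quadratic reciprocity solves
`t² + b = 2pa`, and then `m` is a diagonal entry of a positive definite `3 × 3` matrix of
determinant one with leading minors `a` and `b`. By Hermite reduction such a matrix is the Gram
matrix of vectors of `ℤ³`.

A representation `m = x² + y² + z²` gives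
`3m = (x + y + z)² + 2((x + y - 2z)/2)² + 6((x - y)/2)²`, and multiplying `b + c√-3` or `a + b√-2`
by the elements `(1 ± √-3)/2` or `(1 ± 2√-2)/3` of norm one changes residues modulo `2` and `3`
until `a`, `b`, `c` are prime to `6`.
-/

section Gram

open Matrix

variable {n R : Type*} [Fintype n] [CommRing R]

/-- `M` is the Gram matrix of vectors of `Rⁿ` indexed by `n`, namely the columns of `P`;
equivalently, the quadratic form of `M` arises from a sum of squares by a linear substitution. -/
def IsGram (M : Matrix n n R) : Prop := ∃ P : Matrix n n R, Pᵀ * P = M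

theorem IsGram.exists_sum_sq_eq_diag {M : Matrix n n R} (hM : IsGram M) (i : n) :
    ∃ v : n → R, ∑ j, v j ^ 2 = M i i := by
  obtain ⟨P, rfl⟩ := hM
  exact ⟨fun j ↦ P j i, by simp [mul_apply, sq]⟩

theorem IsGram.transpose_mul_mul {M : Matrix n n R} (hM : IsGram M) (U : Matrix n n R) :
    IsGram (Uᵀ * M * U) := by
  obtain ⟨P, rfl⟩ := hM
  exact ⟨P * U, by simp only [transpose_mul, Matrix.mul_assoc]⟩

theorem isGram_transpose_mul_mul_iff [DecidableEq n] {M U : Matrix n n R} (hU : IsUnit U) :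
    IsGram (Uᵀ * M * U) ↔ IsGram M := by
  refine ⟨fun h ↦ ?_, fun h ↦ h.transpose_mul_mul U⟩
  obtain ⟨V, hUV⟩ := hU.exists_right_inv
  have hVU : Vᵀ * Uᵀ = 1 := by rw [← transpose_mul, hUV, transpose_one]
  convert h.transpose_mul_mul V using 1
  calc M = Vᵀ * Uᵀ * M * (U * V) := by rw [hUV, hVU, Matrix.one_mul, Matrix.mul_one]
    _ = Vᵀ * (Uᵀ * M * U) * V := by simp only [Matrix.mul_assoc]

theorem IsGram.submatrix_equiv {m : Type*} [Fintype m] {M : Matrix n n R} (hM : IsGram M)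
    (e : m ≃ n) : IsGram (M.submatrix e e) := by
  obtain ⟨P, rfl⟩ := hM
  exact ⟨P.submatrix e e, by rw [transpose_submatrix, submatrix_mul_equiv]⟩

theorem isGram_submatrix_equiv_iff {m : Type*} [Fintype m] {M : Matrix n n R} (e : m ≃ n) :
    IsGram (M.submatrix e e) ↔ IsGram M :=
  ⟨fun h ↦ by simpa using h.submatrix_equiv e.symm, fun h ↦ h.submatrix_equiv e⟩

theorem posDef_transpose_mul_mul [DecidableEq n] [PartialOrder R] [StarRing R] [TrivialStar R]
    {M U : Matrix n n R} (hM : M.PosDef) (hU : IsUnit U) : (Uᵀ * M * U).PosDef := by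
  rw [← conjTranspose_eq_transpose_of_trivial]
  exact hM.conjTranspose_mul_mul_same (mulVec_injective_of_isUnit hU)

theorem adjugate_transpose_mul_mul_adjugate [DecidableEq n] {M : Matrix n n R} (hM : M.IsSymm)
    (hdet : M.det = 1) : M.adjugateᵀ * M * M.adjugate = M.adjugate := by
  rw [adjugate_transpose, hM.eq, adjugate_mul, hdet, one_smul, Matrix.one_mul]

theorem isUnit_adjugate_of_det_eq_one [DecidableEq n] {M : Matrix n n R} (hdet : M.det = 1) :
    IsUnit M.adjugate := by
  simp [isUnit_iff_isUnit_det, det_adjugate, hdet]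

theorem isGram_adjugate_iff_of_det_eq_one [DecidableEq n] {M : Matrix n n R} (hM : M.IsSymm)
    (hdet : M.det = 1) : IsGram M.adjugate ↔ IsGram M := by
  rw [← isGram_transpose_mul_mul_iff (M := M) (isUnit_adjugate_of_det_eq_one hdet),
    adjugate_transpose_mul_mul_adjugate hM hdet]

theorem posDef_adjugate_of_det_eq_one [DecidableEq n] [PartialOrder R] [StarRing R] [TrivialStar R]
    {M : Matrix n n R} (hM : M.PosDef) (hdet : M.det = 1) : M.adjugate.PosDef := by
  rw [← adjugate_transpose_mul_mul_adjugate (isHermitian_iff_isSymm.1 hM.isHermitian) hdet]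
  exact posDef_transpose_mul_mul hM (isUnit_adjugate_of_det_eq_one hdet)

theorem adjugate_two_two (M : Matrix (Fin 3) (Fin 3) R) :
    M.adjugate 2 2 = M 0 0 * M 1 1 - M 0 1 * M 1 0 := by
  simp [adjugate_fin_three]

theorem posDef_of_leading_minors_pos [LinearOrder R] [IsStrictOrderedRing R] [StarRing R]
    [TrivialStar R] {M : Matrix (Fin 3) (Fin 3) R} (hM : M.IsSymm) (h₁ : 0 < M 0 0)
    (h₂ : 0 < M 0 0 * M 1 1 - M 0 1 ^ 2) (h₃ : 0 < M.det) : M.PosDef := by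
  refine .of_dotProduct_mulVec_pos ?_ fun x hx ↦ ?_
  · rw [IsHermitian, conjTranspose_eq_transpose_of_trivial, hM.eq]
  set A := M 0 0 * M 1 1 - M 0 1 ^ 2 with hA
  set B := M 0 0 * M 1 2 - M 0 1 * M 0 2 with hB
  have complete_squares : M 0 0 * A * (star x ⬝ᵥ (M *ᵥ x)) =
      A * (M 0 0 * x 0 + M 0 1 * x 1 + M 0 2 * x 2) ^ 2 + (A * x 1 + B * x 2) ^ 2 +
        M 0 0 * M.det * x 2 ^ 2 := by
    simp only [dotProduct, mulVec, Pi.star_apply, star_trivial, Fin.sum_univ_three, det_fin_three,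
      hM.apply 0 1, hM.apply 0 2, hM.apply 1 2, hA, hB]
    ring
  by_contra! hle
  have hzero := (mul_nonpos_of_nonneg_of_nonpos (mul_pos h₁ h₂).le hle).antisymm
    (complete_squares ▸ by positivity)
  rw [complete_squares, add_eq_zero_iff_of_nonneg (by positivity) (by positivity),
    add_eq_zero_iff_of_nonneg (by positivity) (by positivity)] at hzero
  have hx2 : x 2 = 0 := by simpa [h₁.ne', h₃.ne'] using hzero.2
  have hx1 : x 1 = 0 := by simpa [hx2, h₂.ne'] using hzero.1.2
  have hx0 : x 0 = 0 := by simpa [hx1, hx2, h₁.ne', h₂.ne'] using hzero.1.1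
  exact hx (by ext i; fin_cases i <;> assumption)

theorem isGram_of_leading_minors_eq_one {M : Matrix (Fin 3) (Fin 3) R} (hM : M.IsSymm)
    (h₁ : M 0 0 = 1) (h₂ : M.adjugate 2 2 = 1) (h₃ : M.det = 1) : IsGram M := by
  have h10 := hM.apply 0 1
  have h20 := hM.apply 0 2
  have h21 := hM.apply 1 2
  rw [adjugate_two_two, h₁, h10] at h₂
  rw [det_fin_three, h₁, h10, h20, h21] at h₃
  refine ⟨!![1, M 0 1, M 0 2; 0, 1, M 1 2 - M 0 1 * M 0 2; 0, 0, 1], ?_⟩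
  ext i j
  fin_cases i <;> fin_cases j <;>
    simp only [mul_apply, transpose_apply, of_apply, cons_val', cons_val, cons_val_fin_one,
      Fin.sum_univ_three, Fin.zero_eta, Fin.mk_one, Fin.reduceFinMk, mul_zero, zero_mul, mul_one,
      one_mul, add_zero, add_sub_cancel, h₁, h10, h20, h21]
  · linear_combination - h₂
  · ring
  · linear_combination (M 2 2 - M 0 2 ^ 2) * h₂ - h₃

end Gram

section HermiteReduction

open Matrix

theorem exists_abs_two_mul_add_le {a : ℤ} (ha : 0 < a) (b : ℤ) :
    ∃ k, |2 * (a * k + b)| ≤ a := by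
  lift a to ℕ using ha.le
  have hle := Int.le_bmod (x := b) (mod_cast ha)
  have hlt := Int.bmod_lt (x := b) (mod_cast ha)
  refine ⟨-b.bdiv a, ?_⟩
  rw [mul_neg, neg_add_eq_sub, ← Int.bmod_eq_self_sub_mul_bdiv]
  exact abs_le.2 ⟨by omega, by omega⟩

theorem exists_quadratic_lt {a b c : ℤ} (ha : 0 < a) (h : 4 * (a * c - b ^ 2) < 3 * a ^ 2) :
    ∃ k, a * k ^ 2 + 2 * b * k + c < a := by
  obtain ⟨k, hk⟩ := exists_abs_two_mul_add_le ha b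
  refine ⟨k, lt_of_mul_lt_mul_left ?_ (by positivity : 0 ≤ 4 * a)⟩
  calc 4 * a * (a * k ^ 2 + 2 * b * k + c)
      = 4 * (a * c - b ^ 2) + (2 * (a * k + b)) ^ 2 := by ring
    _ < 3 * a ^ 2 + a ^ 2 := add_lt_add_of_lt_of_le h (sq_le_sq.2 (hk.trans (le_abs_self a)))
    _ = 4 * a * a := by ring

theorem exists_transpose_mul_mul_zero_zero_lt {M : Matrix (Fin 3) (Fin 3) ℤ} (hM : M.PosDef)
    (h : 4 * M.adjugate 2 2 < 3 * M 0 0 ^ 2) :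
    ∃ U : Matrix (Fin 3) (Fin 3) ℤ, U.det = -1 ∧ (Uᵀ * M * U) 0 0 < M 0 0 ∧
      (Uᵀ * M * U).adjugate 2 2 = M.adjugate 2 2 := by
  have h10 := (isHermitian_iff_isSymm.1 hM.isHermitian).apply 0 1
  obtain ⟨k, hk⟩ := exists_quadratic_lt (b := M 0 1) (c := M 1 1) hM.diag_pos
    (by simpa [adjugate_two_two, h10, sq] using h)
  refine ⟨!![k, 1, 0; 1, 0, 0; 0, 0, 1], by simp [det_fin_three], ?_, ?_⟩
  · convert hk using 1
    simp only [mul_apply, transpose_apply, of_apply, cons_val', cons_val, cons_val_fin_one,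
      Fin.sum_univ_three, h10]
    ring
  · simp only [adjugate_two_two, mul_apply, transpose_apply, of_apply, cons_val', cons_val,
      cons_val_fin_one, Fin.sum_univ_three]
    ring

-- The adjugate is congruent to `M`, and its first two leading minors, taken from the opposite
-- corner, are those of `M` in exchanged order. Hence the larger minor may be assumed to be `M 0 0`,
-- and it can be lowered, with the other one fixed, until both are one.
theorem isGram_of_posDef_of_det_eq_one {M : Matrix (Fin 3) (Fin 3) ℤ} (hM : M.PosDef)
    (hdet : M.det = 1) : IsGram M := by
  induction hs : (M 0 0 + M.adjugate 2 2).toNat using Nat.strong_induction_on generalizing M with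
  | _ s ih =>
  have hsymm : M.IsSymm := isHermitian_iff_isSymm.1 hM.isHermitian
  have hadj := posDef_adjugate_of_det_eq_one hM hdet
  wlog hle : M.adjugate 2 2 ≤ M 0 0 generalizing M
  · obtain ⟨N, hN⟩ : ∃ N, N = M.adjugate.submatrix (Equiv.swap 0 2) (Equiv.swap 0 2) := ⟨_, rfl⟩
    have hNdet : N.det = 1 := by rw [hN, det_submatrix_equiv_self, det_adjugate, hdet, one_pow]
    have hNpos : N.PosDef := hN ▸ hadj.submatrix (Equiv.injective _)
    have hN₀ : N 0 0 = M.adjugate 2 2 := by simp [hN]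
    have hN₂ : N.adjugate 2 2 = M 0 0 := by
      rw [hN, adjugate_submatrix_equiv_self, adjugate_adjugate _ (by simp), hdet]
      simp
    have hgram : IsGram N := this hNpos hNdet (by rw [hN₀, hN₂, add_comm, hs])
      (isHermitian_iff_isSymm.1 hNpos.isHermitian)
      (posDef_adjugate_of_det_eq_one hNpos hNdet) (by omega)
    rwa [hN, isGram_submatrix_equiv_iff, isGram_adjugate_iff_of_det_eq_one hsymm hdet] at hgram
  have ha : 0 < M 0 0 := hM.diag_pos
  have hA : 0 < M.adjugate 2 2 := hadj.diag_pos
  by_cases h : 4 * M.adjugate 2 2 < 3 * M 0 0 ^ 2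
  · obtain ⟨U, hU, hlt, heq⟩ := exists_transpose_mul_mul_zero_zero_lt hM h
    have hU' : IsUnit U := by simp [isUnit_iff_isUnit_det, hU]
    rw [← isGram_transpose_mul_mul_iff hU']
    exact ih _ (by omega) (posDef_transpose_mul_mul hM hU') (by simp [hU, hdet]) rfl
  · have : M 0 0 = 1 := by nlinarith
    exact isGram_of_leading_minors_eq_one hsymm this (by omega) hdet

end HermiteReduction

section ThreeSquares

theorem exists_three_sq_eq_of_dvd_sq_add {k b m t : ℤ} (hk : 0 < k) (hb : 0 < b)
    (hm : b * m = k + 1) (ht : k ∣ t ^ 2 + b) : ∃ x y z : ℤ, x ^ 2 + y ^ 2 + z ^ 2 = m := by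
  obtain ⟨a, ha⟩ := ht
  have ha_pos : 0 < a := pos_of_mul_pos_right (ha ▸ by positivity) hk.le
  let M : Matrix (Fin 3) (Fin 3) ℤ := !![a, t, 1; t, k, 0; 1, 0, m]
  have hminor : a * k - t ^ 2 = b := by linear_combination - ha
  have hdet : M.det = 1 := by
    simp only [M, Matrix.det_fin_three, Matrix.of_apply, Matrix.cons_val', Matrix.cons_val,
      Matrix.cons_val_fin_one]
    linear_combination m * hminor + hm
  have hM : M.IsSymm := Matrix.IsSymm.ext fun i j ↦ by fin_cases i <;> fin_cases j <;> rfl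
  have hpos : M.PosDef :=
    posDef_of_leading_minors_pos hM ha_pos (hminor ▸ hb) (hdet ▸ one_pos)
  obtain ⟨v, hv⟩ := (isGram_of_posDef_of_det_eq_one hpos hdet).exists_sum_sq_eq_diag 2
  exact ⟨v 0, v 1, v 2, by rw [← Fin.sum_univ_three fun j ↦ v j ^ 2, hv]; rfl⟩

theorem exists_prime_mul_eq_two_mul_add_one {m : ℕ} (hm : m % 8 = 3) :
    ∃ p b : ℕ, p.Prime ∧ p % 4 = 1 ∧ b % 8 = 1 ∧ b * m = 2 * p + 1 := by
  obtain ⟨n, rfl⟩ : ∃ n, m = 8 * n + 3 := ⟨m / 8, by omega⟩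
  have hcop : (4 * n + 1).Coprime (4 * (8 * n + 3)) := by
    refine Nat.Coprime.mul_right (by simp) ?_
    rw [show 8 * n + 3 = 1 + (4 * n + 1) * 2 by ring]
    simp
  obtain ⟨p, hlt, hp, hmod⟩ :=
    Nat.forall_exists_prime_gt_and_modEq (4 * n + 1) (by positivity) hcop
  obtain ⟨v, hv⟩ := (Nat.modEq_iff_dvd' hlt.le).1 hmod.symm
  have hpv : p = 4 * ((8 * n + 3) * v + n) + 1 := by linarith [Nat.sub_add_cancel hlt.le]
  exact ⟨p, 8 * v + 1, hp, by omega, by omega, by rw [hpv]; ring⟩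

open NumberTheorySymbols in
theorem jacobiSym_neg_eq_one_of_dvd_two_mul_add_one {p b : ℕ} (hp : p % 4 = 1) (hb : b % 8 = 1)
    (h : b ∣ 2 * p + 1) : J(-b | p) = 1 := by
  have hp_odd : Odd p := Nat.odd_iff.2 (by omega)
  have hb_odd : Odd b := Nat.odd_iff.2 (by omega)
  have two_eq_one : J(2 | b) = 1 := by
    rw [jacobiSym.at_two hb_odd, ZMod.χ₈_nat_eq_if_mod_eight, if_neg (by omega), if_pos (by omega)]
  have two_mul_p_mod : (2 * p : ℤ) % b = (-1 : ℤ) % b := by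
    rw [Int.emod_eq_emod_iff_emod_sub_eq_zero, sub_neg_eq_add]
    exact Int.emod_eq_zero_of_dvd (mod_cast h)
  calc J(-b | p) = J(b | p) := by
        rw [jacobiSym.neg _ hp_odd, ZMod.χ₄_nat_one_mod_four hp, one_mul]
    _ = J(p | b) := jacobiSym.quadratic_reciprocity_one_mod_four' hb_odd hp
    _ = J(2 * p | b) := by rw [jacobiSym.mul_left, two_eq_one, one_mul]
    _ = J(-1 | b) := jacobiSym.mod_left' two_mul_p_mod
    _ = 1 := by rw [jacobiSym.at_neg_one hb_odd, ZMod.χ₄_nat_one_mod_four (by omega)]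

theorem exists_two_mul_dvd_sq_add {p : ℕ} (hp : Odd p) {b : ℤ} (hb : Odd b)
    (h : IsSquare ((-b : ℤ) : ZMod p)) : ∃ t : ℤ, 2 * (p : ℤ) ∣ t ^ 2 + b := by
  obtain ⟨r, hr⟩ := h
  obtain ⟨u, rfl⟩ := ZMod.intCast_surjective r
  have hu : (p : ℤ) ∣ u ^ 2 + b := by
    rw [← ZMod.intCast_zmod_eq_zero_iff_dvd]
    push_cast at hr ⊢
    rw [sq, ← hr, neg_add_cancel]
  have hp' : Odd (p : ℤ) := mod_cast hp
  obtain ⟨t, ht, htp⟩ : ∃ t : ℤ, Odd t ∧ (p : ℤ) ∣ t ^ 2 + b := by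
    rcases Int.even_or_odd u with hu2 | hu2
    · refine ⟨u + p, hu2.add_odd hp', ?_⟩
      rw [show (u + p) ^ 2 + b = u ^ 2 + b + p * (2 * u + p) by ring]
      exact dvd_add hu (dvd_mul_right _ _)
    · exact ⟨u, hu2, hu⟩
  have h2p : IsCoprime (2 : ℤ) p := mod_cast Nat.isCoprime_iff_coprime.2 hp.coprime_two_left
  exact ⟨t, h2p.mul_dvd (ht.pow.add_odd hb).two_dvd htp⟩

theorem exists_three_sq_eq_of_mod_eight_eq_three {m : ℕ} (hm : m % 8 = 3) :
    ∃ x y z : ℤ, x ^ 2 + y ^ 2 + z ^ 2 = m := by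
  obtain ⟨p, b, hp, hp4, hb8, hbm⟩ := exists_prime_mul_eq_two_mul_add_one hm
  have : Fact p.Prime := ⟨hp⟩
  have hsquare := ZMod.isSquare_of_jacobiSym_eq_one
    (jacobiSym_neg_eq_one_of_dvd_two_mul_add_one hp4 hb8 ⟨m, hbm.symm⟩)
  obtain ⟨t, ht⟩ := exists_two_mul_dvd_sq_add (Nat.odd_iff.2 (by omega))
    (Int.odd_iff.2 (by omega)) hsquare
  exact exists_three_sq_eq_of_dvd_sq_add (by have := hp.pos; positivity) (by omega)
    (mod_cast hbm) ht

end ThreeSquares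

section Residues

theorem odd_of_sq_add_sq_add_sq_mod_four {x y z : ℤ} (h : (x ^ 2 + y ^ 2 + z ^ 2) % 4 = 3) :
    Odd x ∧ Odd y ∧ Odd z := by
  have even_or_odd_sq (w : ℤ) : w ^ 2 % 4 = 0 ∨ Odd w ∧ w ^ 2 % 4 = 1 := by
    rcases Int.even_or_odd w with ⟨k, rfl⟩ | hw
    · exact .inl (Int.emod_eq_zero_of_dvd ⟨k ^ 2, by ring⟩)
    · exact .inr ⟨hw, Int.sq_mod_four_eq_one_of_odd hw⟩
  have hx := even_or_odd_sq x
  have hy := even_or_odd_sq y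
  have hz := even_or_odd_sq z
  exact ⟨(hx.resolve_left (by omega)).1, (hy.resolve_left (by omega)).1,
    (hz.resolve_left (by omega)).1⟩

theorem three_dvd_sub_or_three_dvd_add {a b : ℤ} (h : 3 ∣ a ^ 2 + 2 * b ^ 2) :
    3 ∣ a - b ∨ 3 ∣ a + b := by
  refine Int.prime_three.dvd_or_dvd ?_
  rw [show (a - b) * (a + b) = a ^ 2 + 2 * b ^ 2 - 3 * b ^ 2 by ring]
  exact dvd_sub h (dvd_mul_right 3 _)

theorem exists_sq_add_two_sq_add_six_sq_eq_three_mul {x y z : ℤ} (hxy : Even (x - y))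
    (hyz : Even (y - z)) :
    ∃ a b c : ℤ, a ^ 2 + 2 * b ^ 2 + 6 * c ^ 2 = 3 * (x ^ 2 + y ^ 2 + z ^ 2) ∧ Even (b - c) := by
  obtain ⟨p, hp⟩ := hxy
  obtain ⟨q, hq⟩ := hyz
  obtain rfl : y = z + 2 * q := by omega
  obtain rfl : x = z + 2 * q + 2 * p := by omega
  exact ⟨3 * z + 4 * q + 2 * p, 2 * p + q, q, by ring, p, by ring⟩

-- Multiplication by `1 - √-3`, of norm `4`.
theorem exists_odd_sq_add_three_sq_eq_four_mul {e d : ℤ} (h : Odd (e + d)) :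
    ∃ b c : ℤ, b ^ 2 + 3 * c ^ 2 = 4 * (e ^ 2 + 3 * d ^ 2) ∧ Odd b ∧ Odd c :=
  ⟨e + 3 * d, e - d, by ring, by grind, by grind⟩

-- Multiplication by `(1 ∓ √-8) / 3`, of norm one.
theorem exists_sq_add_eight_sq_parity_flip {a e : ℤ} (ha : Odd a) (h : 3 ∣ a ^ 2 + 2 * e ^ 2) :
    ∃ a' e' : ℤ, a' ^ 2 + 8 * e' ^ 2 = a ^ 2 + 8 * e ^ 2 ∧ Odd a' ∧ Odd (e' + e) := by
  rcases three_dvd_sub_or_three_dvd_add h with ⟨k, hk⟩ | ⟨k, hk⟩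
  · obtain rfl : a = e + 3 * k := by omega
    exact ⟨k + 3 * e, k, by ring, by grind, by grind⟩
  · obtain rfl : a = -e + 3 * k := by omega
    exact ⟨k - 3 * e, k, by ring, by grind, by grind⟩

theorem exists_odd_sq_add_two_sq_add_six_sq {a b c : ℤ} (ha : Odd a) (hbc : Even (b - c))
    (h : 3 ∣ a ^ 2 + 2 * b ^ 2) :
    ∃ a' b' c' : ℤ, a' ^ 2 + 2 * b' ^ 2 + 6 * c' ^ 2 = a ^ 2 + 2 * b ^ 2 + 6 * c ^ 2 ∧
      Odd a' ∧ Odd b' ∧ Odd c' := by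
  rcases Int.even_or_odd b with hb | hb
  · obtain ⟨e, rfl⟩ := hb.two_dvd
    obtain ⟨d, rfl⟩ : 2 ∣ c := by grind
    obtain ⟨a', e', heq, ha', hed⟩ : ∃ a' e' : ℤ,
        a' ^ 2 + 8 * e' ^ 2 = a ^ 2 + 8 * e ^ 2 ∧ Odd a' ∧ Odd (e' + d) := by
      rcases Int.even_or_odd (e + d) with hed | hed
      · obtain ⟨a', e', heq, ha', he'⟩ := exists_sq_add_eight_sq_parity_flip ha
          (by rw [mul_pow] at h; omega : 3 ∣ a ^ 2 + 2 * e ^ 2)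
        exact ⟨a', e', heq, ha', by grind⟩
      · exact ⟨a, e, rfl, ha, hed⟩
    obtain ⟨b', c', hbc', hb', hc'⟩ := exists_odd_sq_add_three_sq_eq_four_mul hed
    exact ⟨a', b', c', by linear_combination heq + 2 * hbc', ha', hb', hc'⟩
  · exact ⟨a, b, c, rfl, ha, hb, by grind⟩

-- Multiplication by `1 ± 2√-2`, of norm `9`.
theorem exists_sq_add_two_sq_eq_nine_mul {u w : ℤ} (h : ¬(3 ∣ u ∧ 3 ∣ w)) :
    ∃ a b : ℤ, a ^ 2 + 2 * b ^ 2 = 9 * (u ^ 2 + 2 * w ^ 2) ∧ Even (a - u) ∧ Even (b - w) ∧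
      ¬(3 ∣ a ∧ 3 ∣ b) := by
  by_cases huw : 3 ∣ u - w
  · exact ⟨u + 4 * w, 2 * u - w, by ring, by grind, by grind, by omega⟩
  · exact ⟨u - 4 * w, 2 * u + w, by ring, by grind, by grind, by omega⟩

theorem exists_sq_add_two_sq_not_three_dvd_both {a b : ℤ} (hpos : 0 < a ^ 2 + 2 * b ^ 2) :
    ∃ a' b' : ℤ, a' ^ 2 + 2 * b' ^ 2 = a ^ 2 + 2 * b ^ 2 ∧ Even (a' - a) ∧ Even (b' - b) ∧
      ¬(3 ∣ a' ∧ 3 ∣ b') := by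
  induction hN : (a ^ 2 + 2 * b ^ 2).toNat using Nat.strong_induction_on generalizing a b with
  | _ N ih =>
  by_cases hab : 3 ∣ a ∧ 3 ∣ b
  · obtain ⟨⟨u, rfl⟩, ⟨w, rfl⟩⟩ := hab
    have hnine : (3 * u) ^ 2 + 2 * (3 * w) ^ 2 = 9 * (u ^ 2 + 2 * w ^ 2) := by ring
    obtain ⟨u', w', heq, hu, hw, huw⟩ := ih _ (by omega) (a := u) (b := w) (by omega) rfl
    obtain ⟨a', b', heq', ha, hb, hab⟩ := exists_sq_add_two_sq_eq_nine_mul huw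
    exact ⟨a', b', by rw [heq', heq, hnine], by grind, by grind, hab⟩
  · exact ⟨a, b, rfl, by simp, by simp, hab⟩

theorem exists_odd_sq_add_two_sq_not_three_dvd {a b : ℤ} (ha : Odd a) (hb : Odd b)
    (h : 3 ∣ a ^ 2 + 2 * b ^ 2) :
    ∃ a' b' : ℤ, a' ^ 2 + 2 * b' ^ 2 = a ^ 2 + 2 * b ^ 2 ∧ Odd a' ∧ Odd b' ∧
      ¬3 ∣ a' ∧ ¬3 ∣ b' := by
  have ha0 : a ≠ 0 := by rintro rfl; simp at ha
  obtain ⟨a', b', heq, ha', hb', hab⟩ :=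
    exists_sq_add_two_sq_not_three_dvd_both (a := a) (b := b) (by positivity)
  have hdvd := three_dvd_sub_or_three_dvd_add (heq ▸ h)
  exact ⟨a', b', heq, by grind, by grind, by omega, by omega⟩

theorem exists_odd_sq_add_three_sq_not_three_dvd {b c : ℤ} (hb : Odd b) (hc : Odd c)
    (hb3 : ¬3 ∣ b) :
    ∃ b' c' : ℤ, b' ^ 2 + 3 * c' ^ 2 = b ^ 2 + 3 * c ^ 2 ∧ Odd b' ∧ Odd c' ∧
      ¬3 ∣ b' ∧ ¬3 ∣ c' := by
  by_cases hc3 : 3 ∣ c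
  · obtain ⟨k, hk⟩ := (hb.sub_odd hc).two_dvd
    obtain rfl : b = c + 2 * k := by omega
    rcases Int.even_or_odd k with hk2 | hk2
    · exact ⟨k - c, k + c, by ring, by grind, by grind, by omega, by omega⟩
    · exact ⟨k + 2 * c, k, by ring, by grind, hk2, by omega, by omega⟩
  · exact ⟨b, c, rfl, hb, hc, hb3, hc3⟩

theorem exists_sq_add_two_sq_add_six_sq_eq_of_mod_eight_eq_three {m : ℕ} (hm : m % 8 = 3) :
    ∃ a b c : ℤ, a ^ 2 + 2 * b ^ 2 + 6 * c ^ 2 = 3 * m ∧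
      (Odd a ∧ ¬3 ∣ a) ∧ (Odd b ∧ ¬3 ∣ b) ∧ (Odd c ∧ ¬3 ∣ c) := by
  obtain ⟨x, y, z, hxyz⟩ := exists_three_sq_eq_of_mod_eight_eq_three hm
  obtain ⟨hx, hy, hz⟩ := odd_of_sq_add_sq_add_sq_mod_four (x := x) (y := y) (z := z) (by omega)
  obtain ⟨a₁, b₁, c₁, h₁, hbc₁⟩ :=
    exists_sq_add_two_sq_add_six_sq_eq_three_mul (hx.sub_odd hy) (hy.sub_odd hz)
  have ha₁ : Odd a₁ := by
    have : Odd (a₁ ^ 2) := Int.odd_iff.2 (by omega)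
    exact (Int.odd_pow' two_ne_zero).1 this
  obtain ⟨a₂, b₂, c, h₂, ha₂, hb₂, hc⟩ :=
    exists_odd_sq_add_two_sq_add_six_sq ha₁ hbc₁ (by omega)
  obtain ⟨a, b₃, h₃, ha, hb₃, ha3, hb₃3⟩ :=
    exists_odd_sq_add_two_sq_not_three_dvd ha₂ hb₂ (by omega)
  obtain ⟨b, c', h₄, hb, hc', hb3, hc3⟩ := exists_odd_sq_add_three_sq_not_three_dvd hb₃ hc hb₃3
  exact ⟨a, b, c', by omega, ⟨ha, ha3⟩, ⟨hb, hb3⟩, ⟨hc', hc3⟩⟩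

end Residues

theorem two_mul_p5 (x : ℤ) : 2 * p5 x = 3 * x ^ 2 - x := by
  refine Int.mul_ediv_cancel' (Even.two_dvd ?_)
  simp [Int.even_sub, Int.even_mul, Int.even_pow, show ¬Even (3 : ℤ) by decide]

theorem sq_six_mul_sub_one (x : ℤ) : (6 * x - 1) ^ 2 = 24 * p5 x + 1 := by
  linear_combination -12 * two_mul_p5 x

theorem exists_sq_eq_twentyfour_mul_p5_add_one {a : ℤ} (h2 : Odd a) (h3 : ¬3 ∣ a) :
    ∃ x : ℤ, a ^ 2 = 24 * p5 x + 1 := by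
  have ha := Int.odd_iff.1 h2
  obtain ⟨x, rfl | rfl⟩ : ∃ x, a = 6 * x - 1 ∨ a = -(6 * x - 1) := by
    by_cases h : a % 3 = 2
    · exact ⟨(a + 1) / 6, by omega⟩
    · exact ⟨-(a / 6), by omega⟩
  · exact ⟨x, sq_six_mul_sub_one x⟩
  · exact ⟨x, by rw [neg_sq, sq_six_mul_sub_one]⟩

theorem p5_add_2p5_add_6p5_universal (n : ℕ) :
    ∃ x y z : ℤ, (n : ℤ) = p5 x + 2 * p5 y + 6 * p5 z := by
  obtain ⟨a, b, c, habc, ⟨ha2, ha3⟩, ⟨hb2, hb3⟩, ⟨hc2, hc3⟩⟩ :=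
    exists_sq_add_two_sq_add_six_sq_eq_of_mod_eight_eq_three (m := 8 * n + 3) (by omega)
  obtain ⟨x, hx⟩ := exists_sq_eq_twentyfour_mul_p5_add_one ha2 ha3
  obtain ⟨y, hy⟩ := exists_sq_eq_twentyfour_mul_p5_add_one hb2 hb3
  obtain ⟨z, hz⟩ := exists_sq_eq_twentyfour_mul_p5_add_one hc2 hc3
  exact ⟨x, y, z, by omega⟩
end
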